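/- Fix 0 < ε < 1 and let p : ℕ → ℝ satisfy 0 ≤ p(n) ≤ 1 − ε for all n. Suppose p(n)·√n / log n → ∞ as n → ∞. Let q(n) denote the Erdős–Rényi probability that a graph drawn from G(n, p(n)) is not Hamiltonian. Then log q(n) / (n · log(1 − p(n))) → 1 as n → ∞; that is, the probability that G(n,p) fails to be Hamiltonian is (1 − p)^{(1+o(1))n}. -/

import Mathlib

open Classical in
/-- The Erdős–Rényi probability that a graph drawn from `G(n, p)` satisfies property `A`. -/
noncomputable def erProb (n : ℕ) (p : ℝ) (A : SimpleGraph (Fin n) → Prop) : ℝ :=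
  ∑ G : SimpleGraph (Fin n),
    if A G then p ^ G.edgeSet.ncard * (1 - p) ^ (n.choose 2 - G.edgeSet.ncard) else 0

/-!
A graph with an isolated vertex is not Hamiltonian, and a given vertex is isolated with probability
`(1 - p) ^ (n - 1)`. Conversely, by the Chvátal–Erdős theorem a non-Hamiltonian graph has an
independent set of size `k + 1` or is disconnected by deleting fewer than `k` vertices. For `k` of
order `2√n`, an independent set of size `k + 1` costs at least `n` non-edges, and so does, up to
`O(√n)`, the cheapest cut, the one isolating a single vertex; larger cuts are so unlikely that the
number of ways to choose them does not matter. Union bounds thus give failure probability at most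
`n ^ O(√n) * (1 - p) ^ (n - O(√n))`, and `√n * log n` is negligible against `n * p` precisely when
`p * √n / log n` tends to infinity.
-/

open Filter MeasureTheory SimpleGraph unitInterval
open scoped Finset

section Cycles

variable {V : Type*} {G : SimpleGraph V} {u v u' v' x y h h' : V} {l l' : List V} {c : Cycle V}

/-- `l` is the vertex list of a path from `u` to `v` in `G`. Unlike for `Walk`, concatenating,
reversing and cutting paths are plain list operations, with no endpoints in the type. -/
structure IsPathList (G : SimpleGraph V) (u v : V) (l : List V) : Prop where
  nodup : l.Nodup
  isChain : l.IsChain G.Adj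
  head?_eq : l.head? = some u
  getLast?_eq : l.getLast? = some v

theorem IsPathList.ne_nil (hl : IsPathList G u v l) : l ≠ [] := by
  rintro rfl
  simpa using hl.head?_eq

theorem IsPathList.left_mem (hl : IsPathList G u v l) : u ∈ l :=
  List.mem_of_mem_head? hl.head?_eq

theorem IsPathList.reverse (hl : IsPathList G u v l) : IsPathList G v u l.reverse where
  nodup := List.nodup_reverse.2 hl.nodup
  isChain := List.isChain_reverse.2 (hl.isChain.imp fun _ _ hab => hab.symm)
  head?_eq := by rw [List.head?_reverse, hl.getLast?_eq]
  getLast?_eq := by rw [List.getLast?_reverse, hl.head?_eq]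

theorem IsPathList.append (hl : IsPathList G u v l) (hl' : IsPathList G u' v' l')
    (hadj : G.Adj v u') (hdisj : l.Disjoint l') : IsPathList G u v' (l ++ l') where
  nodup := hl.nodup.append hl'.nodup hdisj
  isChain := by
    refine List.isChain_append.2 ⟨hl.isChain, hl'.isChain, ?_⟩
    simpa [hl.getLast?_eq, hl'.head?_eq] using hadj
  head?_eq := by rw [List.head?_append, hl.head?_eq, Option.some_or]
  getLast?_eq := by rw [List.getLast?_append, hl'.getLast?_eq, Option.some_or]

theorem IsPathList.of_walk {w : G.Walk u v} (hw : w.IsPath) : IsPathList G u v w.support where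
  nodup := hw.support_nodup
  isChain := w.isChain_adj_support
  head?_eq := by rw [List.head?_eq_some_head w.support_ne_nil, Walk.head_support]
  getLast?_eq := by rw [List.getLast?_eq_some_getLast w.support_ne_nil, Walk.getLast_support]

theorem exists_isPathList_of_mem_componentCompl {K : Set V} {C : G.ComponentCompl K}
    (hu : u ∈ C) (hv : v ∈ C) : ∃ l, IsPathList G u v l ∧ ∀ z ∈ l, z ∉ K := by
  classical
  obtain ⟨huK, rfl⟩ := hu
  obtain ⟨hvK, hvC⟩ := hv
  obtain ⟨w⟩ := ConnectedComponent.exact hvC.symm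
  refine ⟨_, .of_walk ((w.map (Embedding.induce Kᶜ).toHom).bypass_isPath), fun z hz => ?_⟩
  have hz' := Walk.support_bypass_subset_support _ hz
  obtain ⟨z, -, rfl⟩ := List.mem_map.1 (Walk.support_map _ w ▸ hz')
  exact z.2

theorem IsPathList.exists_walk (hl : IsPathList G u v l) :
    ∃ w : G.Walk u v, w.IsPath ∧ w.support = l := by
  have hu : l.head hl.ne_nil = u := by
    simpa [List.head?_eq_some_head hl.ne_nil] using hl.head?_eq
  have hv : l.getLast hl.ne_nil = v := by
    simpa [List.getLast?_eq_some_getLast hl.ne_nil] using hl.getLast?_eq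
  have hsupp : ((Walk.ofSupport l hl.ne_nil hl.isChain).copy hu hv).support = l := by
    rw [Walk.support_copy, Walk.support_ofSupport]
  exact ⟨_, by rw [Walk.isPath_def, hsupp]; exact hl.nodup, hsupp⟩

/-- The cyclic list `c` has distinct entries, cyclically consecutive ones being adjacent in `G`.
So `c` is the vertex sequence of a cycle of `G`, or one of the degenerate cases: empty, or the two
ends of an edge. -/
structure IsVertexCycle (G : SimpleGraph V) (c : Cycle V) : Prop where
  nodup : c.Nodup
  chain : c.Chain G.Adj

theorem isVertexCycle_coe_iff (hu : l.head? = some u) (hv : l.getLast? = some v) :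
    IsVertexCycle G l ↔ IsPathList G u v l ∧ G.Adj v u := by
  obtain ⟨a, t, rfl⟩ : ∃ a t, l = a :: t := List.exists_cons_of_ne_nil (by rintro rfl; simp at hu)
  obtain rfl : a = u := by simpa using hu
  have hchain : Cycle.Chain G.Adj (a :: t : List V) ↔ (a :: t).IsChain G.Adj ∧ G.Adj v a := by
    rw [Cycle.chain_coe_cons, ← List.cons_append, List.isChain_append]
    simp [hv]
  exact ⟨fun hc => ⟨⟨hc.nodup, (hchain.1 hc.chain).1, hu, hv⟩, (hchain.1 hc.chain).2⟩,
    fun hl => ⟨hl.1.nodup, hchain.2 ⟨hl.1.isChain, hl.2⟩⟩⟩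

theorem IsPathList.isVertexCycle (hl : IsPathList G u v l) (hadj : G.Adj v u) :
    IsVertexCycle G l :=
  (isVertexCycle_coe_iff hl.head?_eq hl.getLast?_eq).2 ⟨hl, hadj⟩

theorem isVertexCycle_nil : IsVertexCycle G Cycle.nil :=
  ⟨Cycle.nodup_nil, Cycle.Chain.nil _⟩

theorem isVertexCycle_pair (hadj : G.Adj u v) : IsVertexCycle G ([u, v] : List V) :=
  IsPathList.isVertexCycle ⟨by simp [hadj.ne], by simp [hadj], rfl, rfl⟩ hadj.symm

theorem exists_coe_eq_of_mem_cycle {α : Type*} {c : Cycle α} {x : α} (hx : x ∈ c) :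
    ∃ l : List α, (l : Cycle α) = c ∧ l.getLast? = some x := by
  induction c using Quotient.inductionOn with | h l
  obtain ⟨s, t, rfl⟩ := List.append_of_mem hx
  refine ⟨t ++ (s ++ [x]), Cycle.coe_eq_coe.2 ?_, by simp⟩
  rw [List.append_cons s x t]
  exact List.isRotated_append

namespace IsVertexCycle

variable [DecidableEq V]

/-- The map sending each vertex of `c` to the next one along `c`, and fixing all other vertices. -/
def succ (hc : IsVertexCycle G c) : Equiv.Perm V :=
  c.formPerm hc.nodup

theorem head?_eq_succ (hc : IsVertexCycle G c) (hl : (l : Cycle V) = c)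
    (hx : l.getLast? = some x) : l.head? = some (hc.succ x) := by
  subst hl
  obtain ⟨a, t, rfl⟩ : ∃ a t, l = a :: t := List.exists_cons_of_ne_nil (by rintro rfl; simp at hx)
  obtain rfl : (a :: t).getLast (List.cons_ne_nil a t) = x := by
    simpa [List.getLast?_eq_some_getLast (List.cons_ne_nil a t)] using hx
  exact congrArg some (List.formPerm_apply_getLast a t).symm

theorem exists_isPathList_succ (hc : IsVertexCycle G c) (hx : x ∈ c) :
    ∃ l : List V, (l : Cycle V) = c ∧ IsPathList G (hc.succ x) x l ∧ G.Adj x (hc.succ x) := by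
  obtain ⟨l, hl, hlast⟩ := exists_coe_eq_of_mem_cycle hx
  exact ⟨l, hl, (isVertexCycle_coe_iff (hc.head?_eq_succ hl hlast) hlast).1 (hl ▸ hc)⟩

theorem succ_mem (hc : IsVertexCycle G c) (hx : x ∈ c) : hc.succ x ∈ c := by
  obtain ⟨l, rfl, hl, -⟩ := hc.exists_isPathList_succ hx
  exact Cycle.mem_coe_iff.2 hl.left_mem

theorem exists_arcs (hc : IsVertexCycle G c) (hx : x ∈ c) (hy : y ∈ c) (hxy : x ≠ y) :
    ∃ l l' : List V, ((l ++ l' : List V) : Cycle V) = c ∧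
      IsPathList G (hc.succ x) y l ∧ IsPathList G (hc.succ y) x l' := by
  obtain ⟨l, hl, hpath, -⟩ := hc.exists_isPathList_succ hx
  obtain ⟨s, t, rfl⟩ := List.append_of_mem (Cycle.mem_coe_iff.1 (hl ▸ hy))
  rw [List.append_cons] at hl hpath
  obtain ⟨hns, hnt, -⟩ := List.nodup_append.1 hpath.nodup
  obtain ⟨hcs, hct, -⟩ := List.isChain_append.1 hpath.isChain
  have ht : t ≠ [] := by
    rintro rfl
    simpa [hxy.symm] using hpath.getLast?_eq
  have hhead : t.head? = some (hc.succ y) := by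
    rw [← List.head?_append_of_ne_nil t (l₂ := s ++ [y]) ht]
    exact hc.head?_eq_succ (hl ▸ Cycle.coe_eq_coe.2 List.isRotated_append) (by simp)
  refine ⟨s ++ [y], t, hl, ⟨hns, hcs, ?_, by simp⟩, hnt, hct, hhead, ?_⟩
  · rw [← List.head?_append_of_ne_nil _ (by simp), hpath.head?_eq]
  · rw [← List.getLast?_append_of_ne_nil _ ht, hpath.getLast?_eq]

theorem isHamiltonian [Fintype V] (hV : 3 ≤ Fintype.card V) (hc : IsVertexCycle G c)
    (hspan : ∀ v, v ∈ c) : G.IsHamiltonian := by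
  intro _
  obtain ⟨x⟩ : Nonempty V := Fintype.card_pos_iff.1 (by omega)
  obtain ⟨l, rfl, hl, hadj⟩ := hc.exists_isPathList_succ (hspan x)
  obtain ⟨w, hw, hwl⟩ := hl.exists_walk
  have hlen : w.length + 1 = Fintype.card V := by
    rw [← Walk.length_support, hwl, ← List.toFinset_card_of_nodup hl.nodup,
      Finset.eq_univ_of_forall fun v => List.mem_toFinset.2 (hspan v), Finset.card_univ]
  refine ⟨x, w.cons hadj, ?_⟩
  rw [Walk.isHamiltonianCycle_iff_isCycle_and_length_eq, Walk.isCycle_iff_isPath_tail_and_le_length,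
    Walk.length_cons]
  exact ⟨⟨by simpa using hw, by omega⟩, hlen⟩

end IsVertexCycle

end Cycles

section Connectivity

variable {V : Type*} {G : SimpleGraph V} {k : ℕ}

/-- Deleting fewer than `k` vertices never disconnects `G`. Unlike in the usual convention there is
no requirement `k < |V|`, so complete graphs qualify for every `k`. -/
def IsVertexConnected (G : SimpleGraph V) (k : ℕ) : Prop :=
  ∀ S : Finset V, #S < k → (G.induce (S : Set V)ᶜ).Preconnected

theorem IsVertexConnected.preconnected (hconn : IsVertexConnected G k) (hk : 0 < k) :
    G.Preconnected := fun v w =>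
  (hconn ∅ hk ⟨v, by simp⟩ ⟨w, by simp⟩).map (Embedding.induce _).toHom

theorem exists_cut_of_not_preconnected_induce_compl [Fintype V] [DecidableEq V] {S : Finset V}
    (hS : ¬ (G.induce (S : Set V)ᶜ).Preconnected) :
    ∃ A : Finset V, A.Nonempty ∧ Disjoint S A ∧ #A ≤ #(S ∪ A)ᶜ ∧
      ∀ a ∈ A, ∀ b ∈ (S ∪ A)ᶜ, ¬ G.Adj a b := by
  classical
  obtain ⟨u, v, huv⟩ : ∃ u v, ¬ (G.induce (S : Set V)ᶜ).Reachable u v := by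
    simpa [Preconnected] using hS
  have hcut : ∀ C : G.ComponentCompl (S : Set V), Disjoint S (C : Set V).toFinset ∧
      ∀ a ∈ (C : Set V).toFinset, ∀ b ∈ (S ∪ (C : Set V).toFinset)ᶜ, ¬ G.Adj a b := by
    intro C
    refine ⟨Finset.disjoint_coe.1 (by simpa using C.disjoint_right), fun a ha b hb hab => ?_⟩
    simp only [Finset.compl_union, Finset.mem_inter, Finset.mem_compl, Set.mem_toFinset] at ha hb
    exact hb.2 (ComponentCompl.mem_of_adj a b ha (by simpa using hb.1) hab)
  have hdisj : Disjoint (G.componentComplMk u.2 : Set V) (G.componentComplMk v.2) :=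
    ComponentCompl.pairwise_disjoint fun h => huv (ConnectedComponent.exact h)
  wlog hle : #(G.componentComplMk u.2 : Set V).toFinset ≤ #(G.componentComplMk v.2 : Set V).toFinset
    generalizing u v
  · exact this v u (fun h => huv h.symm) hdisj.symm (le_of_not_ge hle)
  refine ⟨(G.componentComplMk u.2 : Set V).toFinset, by simp, (hcut _).1, ?_, (hcut _).2⟩
  refine hle.trans (Finset.card_le_card fun b hb => ?_)
  simp only [Finset.compl_union, Finset.mem_inter, Finset.mem_compl, Set.mem_toFinset] at hb ⊢
  exact ⟨ComponentCompl.notMem_of_mem hb, Set.disjoint_right.1 hdisj hb⟩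

end Connectivity

section LongestCycle

variable {V : Type*} {G : SimpleGraph V} {x y h h' : V} {l : List V} {c : Cycle V} {k : ℕ}

theorem exists_longest_isVertexCycle [Finite V] (G : SimpleGraph V) :
    ∃ c, MaximalFor (IsVertexCycle G) Cycle.length c := by
  classical
  cases nonempty_fintype V
  have hfin : {c : Cycle V | IsVertexCycle G c}.Finite :=
    (Set.finite_coe_iff.1 (inferInstanceAs (Finite {c : Cycle V // c.Nodup}))).subset
      fun _ hc => hc.nodup
  exact hfin.exists_maximalFor Cycle.length _ ⟨Cycle.nil, isVertexCycle_nil⟩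

theorem exists_mem_longest_isVertexCycle (hmax : MaximalFor (IsVertexCycle G) Cycle.length c)
    (hadj : G.Adj x y) : ∃ z, z ∈ c := by
  induction c using Cycle.induction_on with
  | nil => simpa using hmax.le (isVertexCycle_pair hadj)
  | cons a l => exact ⟨a, by simp⟩

/-- The vertices of `K` with a neighbour in the component `C` of `G - K`. -/
def attachment {K : Set V} (C : G.ComponentCompl K) : Set V :=
  {x ∈ K | ∃ h ∈ C, G.Adj x h}

theorem mem_of_notMem_attachment {K : Set V} {C : G.ComponentCompl K}
    (hpre : (G.induce (attachment C)ᶜ).Preconnected) (hx : x ∉ attachment C) : x ∈ C := by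
  obtain ⟨h, hh⟩ := C.nonempty
  have hwalk : ∀ {a b : ((attachment C)ᶜ : Set V)},
      (G.induce (attachment C)ᶜ).Walk a b → (a : V) ∈ C → (b : V) ∈ C := by
    intro a b w
    induction w with
    | nil => exact id
    | @cons a b _ hab _ ih =>
      exact fun ha => ih (ComponentCompl.mem_of_adj _ _ ha
        (fun hbK => b.2 ⟨hbK, a, ha, hab.symm⟩) hab)
  have hh' : h ∉ attachment C := fun hK => ComponentCompl.notMem_of_mem hh hK.1
  obtain ⟨w⟩ := hpre ⟨h, hh'⟩ ⟨x, hx⟩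
  exact hwalk w hh

-- Otherwise `l`, continued by a path from `h` to `h'` inside `C`, closes to a longer cycle.
theorem IsPathList.not_adj_of_longest (hmax : MaximalFor (IsVertexCycle G) Cycle.length c)
    {C : G.ComponentCompl {x | x ∈ c}} (hl : IsPathList G y x l) (hlc : ∀ z ∈ l, z ∈ c)
    (hlen : c.length ≤ l.length) (hh : h ∈ C) (hh' : h' ∈ C) (hxh : G.Adj x h) :
    ¬ G.Adj y h' := by
  intro hyh'
  obtain ⟨l', hl', hl'C⟩ := exists_isPathList_of_mem_componentCompl hh hh'
  have hlonger : IsVertexCycle G (l ++ l' : List V) :=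
    (hl.append hl' hxh fun z hz hz' => hl'C z hz' (hlc z hz)).isVertexCycle hyh'.symm
  have hle : (l ++ l').length ≤ c.length := hmax.le hlonger
  have hpos := List.length_pos_iff.2 hl'.ne_nil
  rw [List.length_append] at hle
  omega

theorem not_adj_succ_of_mem_attachment [DecidableEq V]
    (hmax : MaximalFor (IsVertexCycle G) Cycle.length c) {C : G.ComponentCompl {x | x ∈ c}}
    (hx : x ∈ attachment C) (hh' : h' ∈ C) :
    ¬ G.Adj (hmax.prop.succ x) h' := by
  obtain ⟨hxc, h, hh, hxh⟩ := hx
  obtain ⟨l, rfl, hl, -⟩ := hmax.prop.exists_isPathList_succ hxc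
  exact hl.not_adj_of_longest hmax (fun _ => Cycle.mem_coe_iff.2) le_rfl hh hh' hxh

-- Reversing the arc from `succ x` to `y` gives a path from `y` to `x` through all vertices of `c`.
theorem not_adj_succ_succ [DecidableEq V]
    (hmax : MaximalFor (IsVertexCycle G) Cycle.length c) {C : G.ComponentCompl {x | x ∈ c}}
    (hx : x ∈ attachment C) (hy : y ∈ attachment C) :
    ¬ G.Adj (hmax.prop.succ x) (hmax.prop.succ y) := by
  intro hadj
  obtain rfl | hxy := eq_or_ne x y
  · exact G.irrefl hadj
  obtain ⟨hxc, h, hh, hxh⟩ := hx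
  obtain ⟨hyc, h', hh', hyh'⟩ := hy
  obtain ⟨l, l', hc, hl, hl'⟩ := hmax.prop.exists_arcs hxc hyc hxy
  have hdisj : l.Disjoint l' :=
    List.disjoint_of_nodup_append (Cycle.nodup_coe_iff.1 (hc ▸ hmax.prop.nodup))
  have hpath := hl.reverse.append hl' hadj (by simpa [List.Disjoint] using hdisj)
  refine hpath.not_adj_of_longest hmax (fun z hz => ?_) ?_ hh hh' hxh hyh'
  · rw [← hc, Cycle.mem_coe_iff]
    simpa using hz
  · rw [← hc]
    simp

theorem isIndepSet_insert_succ_image [DecidableEq V]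
    (hmax : MaximalFor (IsVertexCycle G) Cycle.length c) {C : G.ComponentCompl {x | x ∈ c}}
    (hh : h ∈ C) :
    G.IsIndepSet (insert h (hmax.prop.succ '' attachment C)) := by
  have hnot : ∀ b ∈ hmax.prop.succ '' attachment C, ¬ G.Adj h b := by
    rintro _ ⟨x, hx, rfl⟩ hadj
    exact not_adj_succ_of_mem_attachment hmax hx hh hadj.symm
  refine Set.Pairwise.insert ?_ fun b hb _ => ⟨hnot b hb, fun hadj => hnot b hb hadj.symm⟩
  rintro _ ⟨x, hx, rfl⟩ _ ⟨y, hy, rfl⟩ -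
  exact not_adj_succ_succ hmax hx hy

theorem ncard_attachment_lt [Finite V] (hmax : MaximalFor (IsVertexCycle G) Cycle.length c)
    (C : G.ComponentCompl {x | x ∈ c}) (hfree : G.IndepSetFree (k + 1)) :
    (attachment C).ncard < k := by
  classical
  by_contra! hk
  obtain ⟨h, hh⟩ := C.nonempty
  have hh' : h ∉ hmax.prop.succ '' attachment C := by
    rintro ⟨x, hx, rfl⟩
    exact ComponentCompl.notMem_of_mem hh (hmax.prop.succ_mem hx.1)
  have hcard : (insert h (hmax.prop.succ '' attachment C)).ncard = (attachment C).ncard + 1 := by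
    rw [Set.ncard_insert_of_notMem hh', Set.ncard_image_of_injective _ (Equiv.injective _)]
  obtain ⟨t, ht, htk⟩ := Set.exists_subset_card_eq (hcard ▸ Nat.add_le_add_right hk 1)
  lift t to Finset V using t.toFinite
  exact hfree t ⟨(isIndepSet_insert_succ_image hmax hh).mono ht, by simpa using htk⟩

theorem not_preconnected_induce_compl_attachment
    (hmax : MaximalFor (IsVertexCycle G) Cycle.length c) (C : G.ComponentCompl {x | x ∈ c})
    (hx : x ∈ c) : ¬ (G.induce (attachment C)ᶜ).Preconnected := by
  classical
  intro hpre
  have hmem : ∀ y ∈ c, y ∈ attachment C := fun y hy =>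
    by_contra fun hyC => ComponentCompl.notMem_of_mem (mem_of_notMem_attachment hpre hyC) hy
  obtain ⟨-, h, hh, hadj⟩ := hmem _ (hmax.prop.succ_mem hx)
  exact not_adj_succ_of_mem_attachment hmax (hmem x hx) hh hadj

/-- The **Chvátal–Erdős theorem**. -/
theorem isHamiltonian_of_isVertexConnected [Fintype V] [DecidableEq V]
    (hV : 3 ≤ Fintype.card V) (hconn : IsVertexConnected G k)
    (hfree : G.IndepSetFree (k + 1)) : G.IsHamiltonian := by
  have : Nontrivial V := Fintype.one_lt_card_iff_nontrivial.1 (by omega)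
  obtain ⟨c, hmax⟩ := exists_longest_isVertexCycle G
  refine hmax.prop.isHamiltonian hV ?_
  by_contra! ⟨v, hv⟩
  set C := G.componentComplMk (K := {x | x ∈ c}) hv
  have hlt := ncard_attachment_lt hmax C hfree
  obtain ⟨w, hvw⟩ := (hconn.preconnected (by omega)).exists_adj_of_nontrivial v
  obtain ⟨x, hx⟩ := exists_mem_longest_isVertexCycle hmax hvw
  refine not_preconnected_induce_compl_attachment hmax C hx ?_
  obtain ⟨S, hS⟩ := (Set.toFinite (attachment C)).exists_finset_coe
  rw [← hS] at hlt ⊢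
  exact hconn S (by simpa using hlt)

end LongestCycle
section RandomGraph

open ProbabilityTheory

theorem setBernoulli_real_forall_notMem {ι : Type*} {u : Set ι} (p : I) {F : Finset ι}
    (hF : (F : Set ι) ⊆ u) : setBer(u, p).real {s | ∀ i ∈ F, i ∉ s} = (1 - p : ℝ) ^ #F := by
  let μ (i : ι) : Measure Prop :=
    toNNReal p • Measure.dirac (i ∈ u) + toNNReal (σ p) • Measure.dirac False
  have hμ (i : ι) (hi : i ∈ F) : μ i {False} = toNNReal (σ p) := by
    simp [μ, show i ∈ u from hF hi]
  have hpre : (fun q : ι → Prop => {i | q i}) ⁻¹' {s | ∀ i ∈ F, i ∉ s} =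
      Set.pi F fun _ => {False} := by
    ext q
    simp [Set.mem_pi]
  rw [Measure.real, setBernoulli_apply', hpre,
    Measure.infinitePi_pi (μ := μ) fun _ _ => MeasurableSet.singleton False,
    Finset.prod_congr rfl hμ, Finset.prod_const]
  simp

variable {V : Type*}

theorem binomialRandom_real_forall_notMem_edgeSet [Countable V] (p : I) {F : Finset (Sym2 V)}
    (hF : ∀ e ∈ F, ¬ e.IsDiag) :
    G(V, p).real {G | ∀ e ∈ F, e ∉ G.edgeSet} = (1 - p : ℝ) ^ #F := by
  have hsets : MeasurableSet {s : Set (Sym2 V) | ∀ e ∈ F, e ∉ s} := by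
    simp only [Set.ofPred_forall]
    exact Finset.measurableSet_biInter _ fun e _ => (measurable_set_mem e).not.setOf
  have hgraphs : MeasurableSet {G : SimpleGraph V | ∀ e ∈ F, e ∉ G.edgeSet} :=
    measurable_edgeSet hsets
  have hpre : fromEdgeSet ⁻¹' {G | ∀ e ∈ F, e ∉ G.edgeSet} =
      {s : Set (Sym2 V) | ∀ e ∈ F, e ∉ s} := by
    ext s
    simp +contextual [hF]
  rw [binomialRandom_eq_map, map_measureReal_apply measurable_fromEdgeSet hgraphs, hpre,
    setBernoulli_real_forall_notMem (u := Sym2.diagSetᶜ) p fun e he => hF e he]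

theorem binomialRandom_real_isIndepSet [Countable V] (p : I) (t : Finset V) :
    G(V, p).real {G | G.IsIndepSet (t : Set V)} = (1 - p : ℝ) ^ (#t).choose 2 := by
  classical
  rw [← Sym2.card_image_offDiag, ← binomialRandom_real_forall_notMem_edgeSet p]
  · congr 1
    ext G
    simp only [Set.mem_ofPred_eq, Finset.forall_mem_image, Prod.forall, Finset.mem_offDiag, and_imp]
    exact ⟨fun h a b ha hb hab => h ha hb hab, fun h a ha b hb hab => h a b ha hb hab⟩
  · simp only [Finset.forall_mem_image, Prod.forall, Finset.mem_offDiag, and_imp]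
    exact fun a b _ _ hab => hab

theorem binomialRandom_real_forall_not_adj [Countable V] (p : I) {A B : Finset V}
    (hAB : Disjoint A B) :
    G(V, p).real {G | ∀ a ∈ A, ∀ b ∈ B, ¬ G.Adj a b} = (1 - p : ℝ) ^ (#A * #B) := by
  classical
  have hinj : Set.InjOn (fun z : V × V => s(z.1, z.2)) ↑(A ×ˢ B) := by
    rintro ⟨a, b⟩ hab ⟨a', b'⟩ hab' heq
    obtain ⟨rfl, rfl⟩ | ⟨rfl, rfl⟩ := Sym2.eq_iff.1 heq
    · rfl
    · exact absurd (Finset.mem_product.1 hab').2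
        (Finset.disjoint_left.1 hAB (Finset.mem_product.1 hab).1)
  rw [← Finset.card_product, ← Finset.card_image_of_injOn hinj,
    ← binomialRandom_real_forall_notMem_edgeSet p]
  · congr 1
    ext G
    simp only [Set.mem_ofPred_eq, Finset.forall_mem_image, Prod.forall, Finset.mem_product, and_imp]
    exact ⟨fun h a b ha hb hab => h a ha b hb hab, fun h a ha b hb hab => h a b ha hb hab⟩
  · simp only [Finset.forall_mem_image, Prod.forall, Finset.mem_product, and_imp]
    rintro a b ha hb (rfl : a = b)
    exact Finset.disjoint_left.1 hAB ha hb

theorem pow_card_sub_one_le_binomialRandom_real_not_isHamiltonian [Fintype V] [DecidableEq V]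
    [Nontrivial V] (p : I) :
    (1 - p : ℝ) ^ (Fintype.card V - 1) ≤ G(V, p).real {G | ¬ G.IsHamiltonian} := by
  obtain ⟨v⟩ := (inferInstance : Nonempty V)
  have hdisj : Disjoint {v} ({v} : Finset V)ᶜ := disjoint_compl_right
  calc (1 - p : ℝ) ^ (Fintype.card V - 1)
      = G(V, p).real {G | ∀ a ∈ ({v} : Finset V), ∀ b ∈ ({v} : Finset V)ᶜ, ¬ G.Adj a b} := by
        rw [binomialRandom_real_forall_not_adj p hdisj, Finset.card_singleton, one_mul,
          Finset.card_compl, Finset.card_singleton]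
    _ ≤ G(V, p).real {G | ¬ G.IsHamiltonian} := by
        refine measureReal_mono fun G hG hham => ?_
        obtain ⟨w, hvw⟩ := hham.connected.preconnected.exists_adj_of_nontrivial v
        exact hG v (by simp) w (by simpa using hvw.ne') hvw

theorem binomialRandom_real_not_indepSetFree_le [Fintype V] (p : I) (k : ℕ) :
    G(V, p).real {G | ¬ G.IndepSetFree k} ≤
      (Fintype.card V).choose k * (1 - p : ℝ) ^ k.choose 2 := by
  have hunion : {G : SimpleGraph V | ¬ G.IndepSetFree k} ⊆
      ⋃ t ∈ (Finset.univ : Finset V).powersetCard k, {G | G.IsIndepSet (t : Set V)} := by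
    intro G hG
    obtain ⟨t, ht⟩ := not_forall_not.1 hG
    simpa using ⟨t, ht.card_eq, ht.isIndepSet⟩
  calc G(V, p).real {G | ¬ G.IndepSetFree k}
      ≤ ∑ t ∈ (Finset.univ : Finset V).powersetCard k,
          G(V, p).real {G | G.IsIndepSet (t : Set V)} :=
        (measureReal_mono hunion (measure_ne_top _ _)).trans (measureReal_biUnion_finset_le _ _)
    _ = ∑ _t ∈ (Finset.univ : Finset V).powersetCard k, (1 - p : ℝ) ^ k.choose 2 :=
        Finset.sum_congr rfl fun t ht => by
          rw [binomialRandom_real_isIndepSet, (Finset.mem_powersetCard.1 ht).2]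
    _ = (Fintype.card V).choose k * (1 - p : ℝ) ^ k.choose 2 := by
        rw [Finset.sum_const, Finset.card_powersetCard, Finset.card_univ, nsmul_eq_mul]

theorem sum_inv_card_pow_card_le_three [Fintype V] :
    ∑ A : Finset V, (Fintype.card V : ℝ)⁻¹ ^ #A ≤ 3 := by
  have hbinom := Finset.sum_pow_mul_eq_add_pow ((Fintype.card V : ℝ)⁻¹) 1 (Finset.univ : Finset V)
  simp only [one_pow, mul_one, Finset.powerset_univ, Finset.card_univ] at hbinom
  rw [hbinom, add_comm]
  exact Real.one_add_inv_pow_le_exp.trans Real.exp_one_lt_three.le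

theorem measureReal_le_of_subset_biUnion_finset [Fintype V] {Ω : Type*} [MeasurableSpace Ω]
    {μ : Measure Ω} [IsFiniteMeasure μ] {T : Finset (Finset V)} {E : Set Ω} {B : Finset V → Set Ω}
    {K : ℝ} (hK : 0 ≤ K) (hE : E ⊆ ⋃ A ∈ T, B A)
    (hB : ∀ A ∈ T, μ.real (B A) ≤ K * (Fintype.card V : ℝ)⁻¹ ^ #A) : μ.real E ≤ 3 * K :=
  calc μ.real E
      ≤ ∑ A ∈ T, μ.real (B A) :=
        (measureReal_mono hE (measure_ne_top _ _)).trans (measureReal_biUnion_finset_le _ _)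
    _ ≤ ∑ A ∈ T, K * (Fintype.card V : ℝ)⁻¹ ^ #A := Finset.sum_le_sum hB
    _ ≤ ∑ A : Finset V, K * (Fintype.card V : ℝ)⁻¹ ^ #A :=
        Finset.sum_le_univ_sum_of_nonneg fun A => by positivity
    _ ≤ K * 3 := by
        rw [← Finset.mul_sum]
        gcongr
        exact sum_inv_card_pow_card_le_three
    _ = 3 * K := mul_comm K 3

theorem pow_succ_mul_succ_le {q r : ℝ} {a b : ℕ} (hq : 0 ≤ q) (hqr : q ^ b ≤ r) :
    q ^ ((a + 1) * (b + 1)) ≤ r ^ a * q ^ (a + b + 1) :=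
  calc q ^ ((a + 1) * (b + 1)) = (q ^ b) ^ a * q ^ (a + b + 1) := by ring
    _ ≤ r ^ a * q ^ (a + b + 1) := by gcongr

-- Each vertex of `A` but one gives up `b ≥ d` of the non-edges, where `b + 1 = #(S ∪ A)ᶜ`, in
-- exchange for a factor `|V|⁻¹`; the weights `|V|⁻¹ ^ #A` have bounded sum over all `A`.
theorem binomialRandom_real_forall_not_adj_compl_union_le [Fintype V] [DecidableEq V] {p : I}
    {S A : Finset V} {d : ℕ} (hA : A.Nonempty) (hSA : Disjoint S A) (hd : d + 1 ≤ #(S ∪ A)ᶜ)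
    (hp : Fintype.card V * (1 - p : ℝ) ^ d ≤ 1) :
    G(V, p).real {G | ∀ a ∈ A, ∀ b ∈ (S ∪ A)ᶜ, ¬ G.Adj a b} ≤
      Fintype.card V * (1 - p : ℝ) ^ (Fintype.card V - #S - 1) *
        (Fintype.card V : ℝ)⁻¹ ^ #A := by
  set n := Fintype.card V
  have hq0 : 0 ≤ (1 - p : ℝ) := sub_nonneg.2 p.2.2
  have hcard : #(S ∪ A)ᶜ = n - (#S + #A) := by
    rw [Finset.card_compl, Finset.card_union_of_disjoint hSA]
  have hn0 : (0 : ℝ) < n := by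
    rw [Nat.cast_pos]
    omega
  obtain ⟨a, ha⟩ : ∃ a, #A = a + 1 := Nat.exists_eq_succ_of_ne_zero hA.card_ne_zero
  obtain ⟨b, hb⟩ : ∃ b, #(S ∪ A)ᶜ = b + 1 := Nat.exists_eq_succ_of_ne_zero (by omega)
  have hqb : (1 - p : ℝ) ^ b ≤ (n : ℝ)⁻¹ :=
    calc (1 - p : ℝ) ^ b ≤ (1 - p : ℝ) ^ d :=
          pow_le_pow_of_le_one hq0 (sub_le_self _ p.2.1) (by omega)
      _ ≤ (n : ℝ)⁻¹ := by rwa [← one_div, le_div_iff₀ hn0, mul_comm]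
  rw [binomialRandom_real_forall_not_adj p (disjoint_compl_right.mono_left
    Finset.subset_union_right), hb, ha, show n - #S - 1 = a + b + 1 by omega]
  refine (pow_succ_mul_succ_le hq0 hqb).trans_eq ?_
  rw [pow_succ (n : ℝ)⁻¹ a]
  field_simp

theorem binomialRandom_real_not_preconnected_induce_compl_le [Fintype V] {p : I}
    {S : Finset V} {d : ℕ} (hd : 2 * d + 2 + #S ≤ Fintype.card V)
    (hp : Fintype.card V * (1 - p : ℝ) ^ d ≤ 1) :
    G(V, p).real {G | ¬ (G.induce (S : Set V)ᶜ).Preconnected} ≤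
      3 * (Fintype.card V * (1 - p : ℝ) ^ (Fintype.card V - #S - 1)) := by
  classical
  have hq0 : 0 ≤ (1 - p : ℝ) := sub_nonneg.2 p.2.2
  let cuts : Finset (Finset V) := {A | A.Nonempty ∧ Disjoint S A ∧ #A ≤ #(S ∪ A)ᶜ}
  refine measureReal_le_of_subset_biUnion_finset (T := cuts)
    (B := fun A => {G | ∀ a ∈ A, ∀ b ∈ (S ∪ A)ᶜ, ¬ G.Adj a b}) (by positivity) ?_ ?_
  · intro G hG
    obtain ⟨A, hA, hSA, hle, hadj⟩ := exists_cut_of_not_preconnected_induce_compl hG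
    exact Set.mem_biUnion ((Finset.mem_filter_univ A).2 ⟨hA, hSA, hle⟩) hadj
  · intro A hAcut
    obtain ⟨hA, hSA, hle⟩ := (Finset.mem_filter_univ A).1 hAcut
    have hcard : #(S ∪ A)ᶜ = Fintype.card V - (#S + #A) := by
      rw [Finset.card_compl, Finset.card_union_of_disjoint hSA]
    exact binomialRandom_real_forall_not_adj_compl_union_le hA hSA (by omega) hp

theorem binomialRandom_real_not_isVertexConnected_le [Fintype V] {p : I} {k d : ℕ}
    (hd : 2 * d + 1 + k ≤ Fintype.card V) (hp : Fintype.card V * (1 - p : ℝ) ^ d ≤ 1) :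
    G(V, p).real {G | ¬ IsVertexConnected G k} ≤
      9 * (Fintype.card V : ℝ) ^ (k + 1) * (1 - p : ℝ) ^ (Fintype.card V - k) := by
  set n := Fintype.card V
  have hq0 : 0 ≤ (1 - p : ℝ) := sub_nonneg.2 p.2.2
  have hn1 : (1 : ℝ) ≤ n := by
    rw [Nat.one_le_cast]
    omega
  suffices G(V, p).real {G | ¬ IsVertexConnected G k} ≤
      3 * (3 * n ^ (k + 1) * (1 - p : ℝ) ^ (n - k)) by linarith
  refine measureReal_le_of_subset_biUnion_finset (T := {S : Finset V | #S < k})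
    (B := fun S : Finset V => {G | ¬ (G.induce (S : Set V)ᶜ).Preconnected}) (by positivity) ?_ ?_
  · intro G hG
    obtain ⟨S, hS⟩ := not_forall.1 hG
    obtain ⟨hSk, hS⟩ := Classical.not_imp.1 hS
    exact Set.mem_biUnion ((Finset.mem_filter_univ S).2 hSk) hS
  · intro S hS
    have hSk : #S < k := (Finset.mem_filter_univ S).1 hS
    have hweight : 1 ≤ (n : ℝ) ^ k * (n : ℝ)⁻¹ ^ #S := by
      rw [inv_pow, ← div_eq_mul_inv, one_le_div (by positivity)]
      exact pow_le_pow_right₀ hn1 hSk.le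
    calc G(V, p).real {G | ¬ (G.induce (S : Set V)ᶜ).Preconnected}
        ≤ 3 * (n * (1 - p : ℝ) ^ (n - #S - 1)) :=
          binomialRandom_real_not_preconnected_induce_compl_le (by omega) hp
      _ ≤ 3 * (n * (1 - p : ℝ) ^ (n - k)) := by
          gcongr 3 * (n * ?_)
          exact pow_le_pow_of_le_one hq0 (sub_le_self _ p.2.1) (by omega)
      _ ≤ 3 * (n * (1 - p : ℝ) ^ (n - k)) * ((n : ℝ) ^ k * (n : ℝ)⁻¹ ^ #S) :=
          le_mul_of_one_le_right (by positivity) hweight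
      _ = 3 * n ^ (k + 1) * (1 - p : ℝ) ^ (n - k) * (n : ℝ)⁻¹ ^ #S := by ring

theorem binomialRandom_real_not_isHamiltonian_le [Fintype V] [DecidableEq V] {p : I} {k d : ℕ}
    (hV : 10 ≤ Fintype.card V) (hd : 2 * d + 1 + k ≤ Fintype.card V)
    (hk : Fintype.card V - k ≤ (k + 1).choose 2) (hp : Fintype.card V * (1 - p : ℝ) ^ d ≤ 1) :
    G(V, p).real {G | ¬ G.IsHamiltonian} ≤
      (Fintype.card V : ℝ) ^ (k + 2) * (1 - p : ℝ) ^ (Fintype.card V - k) := by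
  set n := Fintype.card V
  have hq0 : 0 ≤ (1 - p : ℝ) := sub_nonneg.2 p.2.2
  have hq1 : (1 - p : ℝ) ≤ 1 := sub_le_self _ p.2.1
  have hn10 : (10 : ℝ) ≤ n := by exact_mod_cast hV
  have hchvatal : {G : SimpleGraph V | ¬ G.IsHamiltonian} ⊆
      {G | ¬ IsVertexConnected G k} ∪ {G | ¬ G.IndepSetFree (k + 1)} := by
    intro G hG
    by_contra! hcon
    simp only [Set.mem_union, Set.mem_ofPred_eq, not_or, not_not] at hcon
    exact hG (isHamiltonian_of_isVertexConnected (by omega) hcon.1 hcon.2)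
  have hindep : G(V, p).real {G | ¬ G.IndepSetFree (k + 1)} ≤
      n ^ (k + 1) * (1 - p : ℝ) ^ (n - k) := by
    refine (binomialRandom_real_not_indepSetFree_le p (k + 1)).trans ?_
    gcongr ?_ * ?_
    · exact_mod_cast Nat.choose_le_pow n (k + 1)
    · exact pow_le_pow_of_le_one hq0 hq1 hk
  calc G(V, p).real {G | ¬ G.IsHamiltonian}
      ≤ G(V, p).real {G | ¬ IsVertexConnected G k} +
          G(V, p).real {G | ¬ G.IndepSetFree (k + 1)} :=
        (measureReal_mono hchvatal).trans (measureReal_union_le _ _)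
    _ ≤ 9 * n ^ (k + 1) * (1 - p : ℝ) ^ (n - k) + n ^ (k + 1) * (1 - p : ℝ) ^ (n - k) :=
        add_le_add (binomialRandom_real_not_isVertexConnected_le hd hp) hindep
    _ = 10 * n ^ (k + 1) * (1 - p : ℝ) ^ (n - k) := by ring
    _ ≤ n * n ^ (k + 1) * (1 - p : ℝ) ^ (n - k) := by gcongr
    _ = n ^ (k + 2) * (1 - p : ℝ) ^ (n - k) := by ring

theorem erProb_eq_binomialRandom_real (n : ℕ) (p : I) (A : SimpleGraph (Fin n) → Prop) :
    erProb n p A = G(Fin n, p).real {G | A G} := by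
  classical
  have : MeasurableSingletonClass (SimpleGraph (Fin n)) :=
    ⟨fun G => by
      rw [← edgeSet_injective.preimage_image {G}, Set.image_singleton]
      exact measurable_edgeSet (measurableSet_singleton _)⟩
  have hsum : ∑ G with A G, G(Fin n, p).real {G} = G(Fin n, p).real {G | A G} := by
    rw [sum_measureReal_singleton, Finset.coe_filter_univ]
  rw [← hsum, Finset.sum_filter, erProb]
  refine Finset.sum_congr rfl fun G _ => ?_
  simp [Measure.real, binomialRandom_singleton]

end RandomGraph

theorem mul_one_sub_pow_le_one {x p : ℝ} {s : ℕ} (hp : p ≤ 1) (hlog : Real.log x ≤ p * s) :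
    x * (1 - p) ^ s ≤ 1 :=
  calc x * (1 - p) ^ s ≤ Real.exp (Real.log x) * Real.exp (-p) ^ s := by
        gcongr
        · exact Real.le_exp_log x
        · exact Real.one_sub_le_exp_neg p
    _ = Real.exp (Real.log x - p * s) := by
        rw [← Real.exp_nat_mul, ← Real.exp_add]
        ring_nf
    _ ≤ 1 := Real.exp_le_one_iff.2 (sub_nonpos.2 hlog)

theorem log_div_mul_log_le_one {x Q : ℝ} {m n : ℕ} (hx0 : 0 < x) (hx1 : x ≤ 1) (hmn : m ≤ n)
    (hQ : x ^ m ≤ Q) : Real.log Q / (n * Real.log x) ≤ 1 := by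
  refine div_le_one_of_ge ?_ (mul_nonpos_of_nonneg_of_nonpos n.cast_nonneg
    (Real.log_nonpos hx0.le hx1))
  rw [← Real.log_pow]
  exact Real.log_le_log (by positivity) ((pow_le_pow_of_le_one hx0.le hx1 hmn).trans hQ)

theorem sub_log_div_le_log_div_mul_log {x Q M : ℝ} {m n : ℕ} (hx0 : 0 < x) (hx1 : x < 1)
    (hn : 0 < n) (hQ : 0 < Q) (hM : 0 < M) (hQM : Q ≤ M * x ^ m) :
    m / n - Real.log M / (n * -Real.log x) ≤ Real.log Q / (n * Real.log x) := by
  have hn0 : (0 : ℝ) < n := Nat.cast_pos.2 hn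
  have hlogx : Real.log x < 0 := Real.log_neg hx0 hx1
  have hlogQ : Real.log Q ≤ Real.log M + m * Real.log x := by
    rw [← Real.log_pow, ← Real.log_mul hM.ne' (by positivity)]
    exact Real.log_le_log hQ hQM
  calc m / n - Real.log M / (n * -Real.log x)
      = (Real.log M + m * Real.log x) / (n * Real.log x) := by
        field_simp [hlogx.ne]
        ring
    _ ≤ Real.log Q / (n * Real.log x) :=
        div_le_div_of_nonpos_of_le (mul_nonpos_of_nonneg_of_nonpos hn0.le hlogx.le) hlogQ

theorem one_sub_div_sqrt_le_natCast_sub_div {n k : ℕ} {c : ℝ} (hn : 0 < n) (hk : k ≤ c * √n) :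
    1 - c / √n ≤ (n - k : ℕ) / n :=
  calc 1 - c / √n = (n - c * √n) / n := by
        rw [sub_div, div_self (by positivity), mul_div_assoc, Real.sqrt_div_self', mul_one_div]
    _ ≤ (n - k : ℕ) / n := by
        gcongr
        have : (n : ℝ) ≤ (n - k : ℕ) + k := by exact_mod_cast le_tsub_add
        linarith

theorem log_pow_div_le_div {x p L c : ℝ} {k : ℕ} (hx : 1 ≤ x) (hp : 0 < p) (hpL : p ≤ L)
    (hk : k ≤ c * √x) : Real.log (x ^ k) / (x * L) ≤ c / (p * √x / Real.log x) := by
  have hlogx : 0 ≤ Real.log x := Real.log_nonneg hx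
  calc Real.log (x ^ k) / (x * L) ≤ c * √x * Real.log x / (x * p) := by
        rw [Real.log_pow]
        gcongr
        exact mul_nonneg ((Nat.cast_nonneg k).trans hk) hlogx
    _ = c * √x * Real.log x / (√x * √x * p) := by rw [Real.mul_self_sqrt (by positivity)]
    _ = c / (p * √x / Real.log x) := by field_simp

section Asymptotics

open ProbabilityTheory

variable {V : Type*} [Fintype V] [DecidableEq V] {p : I}

theorem log_binomialRandom_real_not_isHamiltonian_div_le_one [Nontrivial V] (hp : (p : ℝ) < 1) :
    Real.log (G(V, p).real {G | ¬ G.IsHamiltonian}) /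
      (Fintype.card V * Real.log (1 - p)) ≤ 1 :=
  log_div_mul_log_le_one (sub_pos.2 hp) (sub_le_self _ p.2.1) (Nat.sub_le _ 1)
    (pow_card_sub_one_le_binomialRandom_real_not_isHamiltonian p)

theorem binomialRandom_real_not_isHamiltonian_le_of_sqrt_le {s : ℕ} (hV : 10 ≤ Fintype.card V)
    (hs : √(Fintype.card V) ≤ s) (hsV : 4 * s + 1 ≤ Fintype.card V)
    (hp : Real.log (Fintype.card V) ≤ p * √(Fintype.card V)) :
    G(V, p).real {G | ¬ G.IsHamiltonian} ≤
      (Fintype.card V : ℝ) ^ (2 * s + 2) * (1 - p : ℝ) ^ (Fintype.card V - 2 * s) := by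
  have hsq : Fintype.card V ≤ s * s := by
    rw [← sq]
    exact_mod_cast (Real.sqrt_le_left s.cast_nonneg).1 hs
  have hchoose : (2 * s + 1).choose 2 = (2 * s + 1) * s := by
    rw [Nat.choose_two_right, Nat.add_sub_cancel]
    exact Nat.div_eq_of_eq_mul_left two_pos (by ring)
  refine binomialRandom_real_not_isHamiltonian_le (d := s) hV (by omega) ?_
    (mul_one_sub_pow_le_one p.2.2 (hp.trans (mul_le_mul_of_nonneg_left hs p.2.1)))
  rw [hchoose]
  nlinarith [Nat.sub_le (Fintype.card V) (2 * s)]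

theorem le_log_binomialRandom_real_not_isHamiltonian_div (hV : 100 ≤ Fintype.card V)
    (hp0 : 0 < (p : ℝ)) (hp1 : (p : ℝ) < 1)
    (hp : Real.log (Fintype.card V) ≤ p * √(Fintype.card V)) :
    1 - 4 / √(Fintype.card V) - 6 / (p * √(Fintype.card V) / Real.log (Fintype.card V)) ≤
      Real.log (G(V, p).real {G | ¬ G.IsHamiltonian}) /
        (Fintype.card V * Real.log (1 - p)) := by
  have hnontrivial : Nontrivial V := Fintype.one_lt_card_iff_nontrivial.1 (by omega)
  have hpos : 0 < G(V, p).real {G | ¬ G.IsHamiltonian} :=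
    (pow_pos (sub_pos.2 hp1) _).trans_le
      (pow_card_sub_one_le_binomialRandom_real_not_isHamiltonian p)
  set n := Fintype.card V
  set s := ⌈√(n : ℝ)⌉₊
  have hn : (100 : ℝ) ≤ n := by exact_mod_cast hV
  have hsqrt : √(n : ℝ) * √n = n := Real.mul_self_sqrt n.cast_nonneg
  have hsqrt10 : 10 ≤ √(n : ℝ) := Real.le_sqrt_of_sq_le (by linarith)
  have hs : s ≤ √(n : ℝ) + 1 := (Nat.ceil_lt_add_one (Real.sqrt_nonneg _)).le
  have hsn : 4 * s + 1 ≤ n := by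
    have : (4 * s + 1 : ℝ) ≤ n := by nlinarith
    exact_mod_cast this
  have hlogp : (p : ℝ) ≤ -Real.log (1 - p) := by
    linarith [Real.log_le_sub_one_of_pos (sub_pos.2 hp1)]
  have hexponent : 1 - 4 / √(n : ℝ) ≤ (n - 2 * s : ℕ) / n :=
    one_sub_div_sqrt_le_natCast_sub_div (by omega) (by push_cast; linarith)
  have hfactor : Real.log ((n : ℝ) ^ (2 * s + 2)) / (n * -Real.log (1 - p)) ≤
      6 / (p * √n / Real.log n) :=
    log_pow_div_le_div (by linarith) hp0 hlogp (by push_cast; linarith)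
  exact (sub_le_sub hexponent hfactor).trans <|
    sub_log_div_le_log_div_mul_log (sub_pos.2 hp1) (sub_lt_self _ hp0) (by omega) hpos
      (by positivity)
      (binomialRandom_real_not_isHamiltonian_le_of_sqrt_le (by omega) (Nat.le_ceil _) hsn hp)

end Asymptotics

theorem random_hamiltonicity_failure_probability_asymptotics_general {p : ℕ → ℝ}
    (hp : ∀ᶠ n in atTop, p n < 1)
    (hlim : Tendsto (fun n : ℕ => p n * √n / Real.log n) atTop atTop) :
    Tendsto (fun n : ℕ => Real.log (erProb n (p n) fun G => ¬ G.IsHamiltonian) /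
      (n * Real.log (1 - p n))) atTop (nhds 1) := by
  have hsqrt : Tendsto (fun n : ℕ => √(n : ℝ)) atTop atTop :=
    Real.tendsto_sqrt_atTop.comp tendsto_natCast_atTop_atTop
  have hlower : Tendsto (fun n : ℕ => 1 - 4 / √(n : ℝ) - 6 / (p n * √n / Real.log n))
      atTop (nhds 1) := by
    simpa using (tendsto_const_nhds.sub (hsqrt.const_div_atTop 4)).sub (hlim.const_div_atTop 6)
  have hbounds : ∀ᶠ n : ℕ in atTop,
      1 - 4 / √(n : ℝ) - 6 / (p n * √n / Real.log n) ≤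
          Real.log (erProb n (p n) fun G => ¬ G.IsHamiltonian) / (n * Real.log (1 - p n)) ∧
        Real.log (erProb n (p n) fun G => ¬ G.IsHamiltonian) / (n * Real.log (1 - p n)) ≤ 1 := by
    filter_upwards [eventually_ge_atTop 100, hp, hlim.eventually_ge_atTop 1] with n hn hp1 hlog
    have hlogn : 0 < Real.log n := Real.log_pos (Nat.one_lt_cast.2 (by omega))
    rw [one_le_div hlogn] at hlog
    have hp0 : 0 < p n := pos_of_mul_pos_left (hlogn.trans_le hlog) (Real.sqrt_nonneg _)
    have hnontrivial : Nontrivial (Fin n) := Fin.nontrivial_iff_two_le.2 (by omega)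
    lift p n to I using ⟨hp0.le, hp1.le⟩ with q
    rw [erProb_eq_binomialRandom_real]
    constructor
    · simpa using le_log_binomialRandom_real_not_isHamiltonian_div (V := Fin n) (by simpa) hp0 hp1
        (by simpa)
    · simpa using log_binomialRandom_real_not_isHamiltonian_div_le_one (V := Fin n) hp1
  exact tendsto_of_tendsto_of_tendsto_of_le_of_le' hlower tendsto_const_nhds
    (hbounds.mono fun _ h => h.1) (hbounds.mono fun _ h => h.2)

theorem random_hamiltonicity_failure_probability_asymptotics
    (ε : ℝ) (hε0 : 0 < ε) (hε1 : ε < 1)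
    (p : ℕ → ℝ) (hp0 : ∀ n, 0 ≤ p n) (hp1 : ∀ n, p n ≤ 1 - ε)
    (hlim : Filter.Tendsto (fun n : ℕ => p n * Real.sqrt n / Real.log n)
      Filter.atTop Filter.atTop) :
    Filter.Tendsto
      (fun n : ℕ =>
        Real.log (erProb n (p n) (fun G => ¬ G.IsHamiltonian)) /
          (n * Real.log (1 - p n)))
      Filter.atTop (nhds 1) :=
  random_hamiltonicity_failure_probability_asymptotics_general
    (.of_forall fun n => (hp1 n).trans_lt (sub_lt_self 1 hε0)) hlim
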